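/- Let D be an integral domain such that the localization D_M is a GCD domain for every maximal ideal M of D, and suppose there is a family F of nonzero prime ideals of D such that D = ∩_{P ∈ F} D_P (the intersection taken inside the quotient field of D) and this intersection is locally finite, i.e., no nonzero nonunit of D belongs to infinitely many members of F. If every invertible ideal of D is principal, then D is a GCD domain. -/

import Mathlib

open scoped nonZeroDivisors

/-! Local finiteness makes a nonzero locally principal ideal `I` agree, at every member of `F`,
with a finitely generated ideal `J ≤ I`: take a nonzero `x ∈ I` together with local generators of
`I` at the finitely many members of `F` containing `x`. Let `M` be a maximal ideal and let `g ∈ I`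
generate `I` at `M`. As `J` is finitely generated, a single `s ∉ M` satisfies `s J ⊆ g D`. Then
`s I ⊆ g D` holds at every member of `F`, hence in `D`, and `s = g (s / g) ∈ I I⁻¹`. So no maximal
ideal contains `I I⁻¹`, that is, `I` is invertible. This applies to `I = aD ∩ bD`. -/

/-- `F` is a defining family of ideals of `D`: `D = ⋂_{P ∈ F} D_P` inside the fraction field `K`.
Membership of `x` in `D_P` is encoded as `x` having a denominator outside `P`, which makes sense
even if `P` is not prime. -/
def IsDefiningFamily {D : Type*} (K : Type*) [CommRing D] [Field K] [Algebra D K]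
    (F : Set (Ideal D)) : Prop :=
  ∀ x : K, (∀ P ∈ F, ∃ a t : D, t ∉ P ∧ x * algebraMap D K t = algebraMap D K a) →
    ∃ d : D, algebraMap D K d = x

/-- Every nonzero nonunit of `D` lies in only finitely many members of the family `F` of ideals;
this is local finiteness of the intersection `⋂_{P ∈ F} D_P`. -/
def IsLocallyFiniteFamily {D : Type*} [CommRing D] (F : Set (Ideal D)) : Prop :=
  ∀ x : D, x ≠ 0 → ¬IsUnit x → {P ∈ F | x ∈ P}.Finite

theorem exists_mem_forall_smul_mem_of_fg {R N : Type*} [CommSemiring R] [AddCommMonoid N]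
    [Module R N] (S : Submonoid R) {J L : Submodule R N} (hJ : J.FG)
    (h : ∀ z ∈ J, ∃ s ∈ S, s • z ∈ L) : ∃ s ∈ S, ∀ z ∈ J, s • z ∈ L := by
  obtain ⟨T, rfl⟩ := hJ
  choose! σ hσS hσ using h
  refine ⟨∏ z ∈ T, σ z, prod_mem fun z hz ↦ hσS z (Submodule.subset_span hz), fun z hz ↦ ?_⟩
  suffices Submodule.span R T ≤ L.comap (LinearMap.lsmul R N (∏ z ∈ T, σ z)) from this hz
  refine Submodule.span_le.mpr fun y hy ↦ ?_
  obtain ⟨c, hc⟩ := Finset.dvd_prod_of_mem σ hy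
  have : c • σ y • y ∈ L := L.smul_mem c (hσ y (Submodule.subset_span hy))
  simpa only [SetLike.mem_coe, Submodule.mem_comap, LinearMap.lsmul_apply, hc, mul_comm, mul_smul]
    using this

theorem exists_mem_forall_dvd_mul_of_isPrincipal_map {R : Type*} [CommSemiring R] (S : Submonoid R)
    (A : Type*) [CommSemiring A] [Algebra R A] [IsLocalization S A] {I : Ideal R}
    (hI : (I.map (algebraMap R A)).IsPrincipal) :
    ∃ g ∈ I, ∀ z ∈ I, ∃ s ∈ S, g ∣ s * z := by
  obtain ⟨h, hh⟩ := hI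
  have h_mem : h ∈ I.map (algebraMap R A) := hh ▸ Submodule.mem_span_singleton_self h
  obtain ⟨⟨⟨g, hg⟩, s⟩, hs⟩ := (IsLocalization.mem_map_algebraMap_iff S A).mp h_mem
  have map_eq : I.map (algebraMap R A) = (Ideal.span {g}).map (algebraMap R A) := by
    rw [Ideal.map_span, Set.image_singleton, ← hs, hh,
      Ideal.span_singleton_mul_right_unit (IsLocalization.map_units A s), Ideal.submodule_span_eq]
  refine ⟨g, hg, fun z hz ↦ ?_⟩
  have hz' := Ideal.mem_map_of_mem (algebraMap R A) hz
  rw [map_eq, IsLocalization.algebraMap_mem_map_algebraMap_iff S] at hz'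
  simpa only [Ideal.mem_span_singleton] using hz'

theorem ne_zero_of_forall_exists_dvd_mul {R : Type*} [CommSemiring R] [NoZeroDivisors R]
    {I P : Ideal R} (hI : I ≠ ⊥) {g : R} (h : ∀ z ∈ I, ∃ t ∉ P, g ∣ t * z) : g ≠ 0 := by
  rintro rfl
  obtain ⟨x, hxI, hx⟩ := Submodule.exists_mem_ne_zero_of_ne_bot hI
  obtain ⟨t, htP, ht⟩ := h x hxI
  have ht0 : t = 0 := (mul_eq_zero.mp (zero_dvd_iff.mp ht)).resolve_right hx
  exact htP (ht0 ▸ P.zero_mem)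

section Domain

variable {D K : Type*} [CommRing D] [Field K] [Algebra D K] [IsFractionRing D K]
  {F : Set (Ideal D)} {I : Ideal D}

theorem IsDefiningFamily.dvd_of_forall_exists_dvd_mul (hF : IsDefiningFamily K F) {g y : D}
    (hg : g ≠ 0) (h : ∀ P ∈ F, ∃ t ∉ P, g ∣ t * y) : g ∣ y := by
  have hgK : algebraMap D K g ≠ 0 :=
    (map_ne_zero_iff _ (IsFractionRing.injective D K)).mpr hg
  obtain ⟨d, hd⟩ := hF (algebraMap D K y / algebraMap D K g) fun P hP ↦ by
    obtain ⟨t, ht, c, hc⟩ := h P hP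
    refine ⟨c, t, ht, ?_⟩
    rw [div_mul_eq_mul_div, div_eq_iff hgK, ← map_mul, ← map_mul, mul_comm y, hc, mul_comm]
  refine ⟨d, IsFractionRing.injective D K ?_⟩
  rw [map_mul, hd, mul_div_cancel₀ _ hgK]

theorem IsLocallyFiniteFamily.finite_setOf_mem (hF : IsLocallyFiniteFamily F)
    (hF_top : ∀ P ∈ F, P ≠ ⊤) {x : D} (hx : x ≠ 0) : {P ∈ F | x ∈ P}.Finite := by
  by_cases hu : IsUnit x
  · exact Set.finite_empty.subset fun P hP ↦
      hF_top P hP.1 (Ideal.eq_top_of_isUnit_mem P hP.2 hu)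
  · exact hF x hx hu

theorem IsLocallyFiniteFamily.exists_fg_le (hF : IsLocallyFiniteFamily F)
    (hF_top : ∀ P ∈ F, P ≠ ⊤) (hI : I ≠ ⊥)
    (hI_local : ∀ P ∈ F, ∃ g ∈ I, ∀ z ∈ I, ∃ t ∉ P, g ∣ t * z) :
    ∃ J ≤ I, J.FG ∧ ∀ P ∈ F, ∀ z ∈ I, ∃ t ∉ P, t * z ∈ J := by
  obtain ⟨x, hxI, hx⟩ := Submodule.exists_mem_ne_zero_of_ne_bot hI
  choose! G hGI hG using hI_local
  have hfin := hF.finite_setOf_mem hF_top hx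
  refine ⟨Ideal.span (insert x (G '' {P ∈ F | x ∈ P})), ?_, ?_, fun P hP z hz ↦ ?_⟩
  · rw [Ideal.span_le, Set.insert_subset_iff, Set.image_subset_iff]
    exact ⟨hxI, fun P hP ↦ hGI P hP.1⟩
  · exact Submodule.fg_span ((hfin.image G).insert x)
  · by_cases hxP : x ∈ P
    · obtain ⟨t, ht, hdvd⟩ := hG P hP z hz
      exact ⟨t, ht, Ideal.mem_of_dvd _ hdvd
        (Ideal.subset_span (Set.mem_insert_of_mem x ⟨P, ⟨hP, hxP⟩, rfl⟩))⟩
    · exact ⟨x, hxP, Ideal.mul_mem_right z _ (Ideal.subset_span (Set.mem_insert x _))⟩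

variable [IsDomain D]

theorem algebraMap_mem_mul_inv {g s : D} (hg : g ≠ 0) (hgI : g ∈ I)
    (hs : ∀ z ∈ I, g ∣ s * z) :
    algebraMap D K s ∈ (I : FractionalIdeal D⁰ K) * (I : FractionalIdeal D⁰ K)⁻¹ := by
  have hgK : algebraMap D K g ≠ 0 :=
    (map_ne_zero_iff _ (IsFractionRing.injective D K)).mpr hg
  have hI : (I : FractionalIdeal D⁰ K) ≠ 0 :=
    FractionalIdeal.coeIdeal_ne_zero.mpr (Submodule.ne_bot_iff _ |>.mpr ⟨g, hgI, hg⟩)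
  rw [← mul_div_cancel₀ (algebraMap D K s) hgK]
  refine FractionalIdeal.mul_mem_mul (FractionalIdeal.mem_coeIdeal_of_mem _ hgI)
    ((FractionalIdeal.mem_inv_iff hI).mpr fun y hy ↦ ?_)
  obtain ⟨z, hz, rfl⟩ := (FractionalIdeal.mem_coeIdeal _).mp hy
  obtain ⟨c, hc⟩ := hs z hz
  refine (FractionalIdeal.mem_one_iff _).mpr ⟨c, ?_⟩
  rw [div_mul_eq_mul_div, eq_div_iff hgK, ← map_mul, ← map_mul, hc, mul_comm]

theorem mul_inv_eq_one_of_forall_isMaximal (hI : I ≠ ⊥)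
    (h : ∀ (M : Ideal D) [M.IsMaximal], ∃ g ∈ I, ∃ s ∉ M, ∀ z ∈ I, g ∣ s * z) :
    (I : FractionalIdeal D⁰ K) * (I : FractionalIdeal D⁰ K)⁻¹ = 1 := by
  obtain ⟨L, hL⟩ : ∃ L : Ideal D, (L : FractionalIdeal D⁰ K) = I * (I : FractionalIdeal D⁰ K)⁻¹ :=
    FractionalIdeal.le_one_iff_exists_coeIdeal.mp (by
      rw [FractionalIdeal.inv_eq]
      exact FractionalIdeal.mul_one_div_le_one)
  rw [← hL, FractionalIdeal.coeIdeal_eq_one, Ideal.one_eq_top]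
  by_contra hL_top
  obtain ⟨M, _, hLM⟩ := Ideal.exists_le_maximal L hL_top
  obtain ⟨g, hgI, s, hsM, hs⟩ := h M
  have hg : g ≠ 0 := ne_zero_of_forall_exists_dvd_mul hI fun z hz ↦ ⟨s, hsM, hs z hz⟩
  have hsL := algebraMap_mem_mul_inv (K := K) hg hgI hs
  rw [← hL, FractionalIdeal.mem_coeIdeal] at hsL
  obtain ⟨s', hs'L, hs'⟩ := hsL
  exact hsM (hLM (IsFractionRing.injective D K hs' ▸ hs'L))

theorem IsDefiningFamily.mul_inv_eq_one_of_locally_isPrincipal (hF : IsDefiningFamily K F)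
    (hF_fin : IsLocallyFiniteFamily F) (hF_top : ∀ P ∈ F, P ≠ ⊤) (hI : I ≠ ⊥)
    (hI_local : ∀ (M : Ideal D) [M.IsMaximal],
      (I.map (algebraMap D (Localization.AtPrime M))).IsPrincipal) :
    (I : FractionalIdeal D⁰ K) * (I : FractionalIdeal D⁰ K)⁻¹ = 1 := by
  have hgen (M : Ideal D) [M.IsMaximal] : ∃ g ∈ I, ∀ z ∈ I, ∃ s ∈ M.primeCompl, g ∣ s * z :=
    exists_mem_forall_dvd_mul_of_isPrincipal_map M.primeCompl _ (hI_local M)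
  have hgenF (P) (hP : P ∈ F) : ∃ g ∈ I, ∀ z ∈ I, ∃ t ∉ P, g ∣ t * z := by
    obtain ⟨M, _, hPM⟩ := Ideal.exists_le_maximal P (hF_top P hP)
    obtain ⟨g, hgI, hg⟩ := hgen M
    exact ⟨g, hgI, fun z hz ↦ (hg z hz).imp fun s hs ↦ ⟨fun hsP ↦ hs.1 (hPM hsP), hs.2⟩⟩
  obtain ⟨J, hJI, hJ_fg, hJ⟩ := hF_fin.exists_fg_le hF_top hI hgenF
  refine mul_inv_eq_one_of_forall_isMaximal hI fun M _ ↦ ?_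
  obtain ⟨g, hgI, hg⟩ := hgen M
  obtain ⟨s, hsM, hs⟩ := exists_mem_forall_smul_mem_of_fg M.primeCompl (L := Ideal.span {g}) hJ_fg
    fun z hz ↦ by simpa only [Ideal.mem_span_singleton, smul_eq_mul] using hg z (hJI hz)
  have hg0 : g ≠ 0 := ne_zero_of_forall_exists_dvd_mul hI hg
  refine ⟨g, hgI, s, hsM, fun z hz ↦ hF.dvd_of_forall_exists_dvd_mul hg0 fun P hP ↦ ?_⟩
  obtain ⟨t, htP, htJ⟩ := hJ P hP z hz
  exact ⟨t, htP, mul_left_comm s t z ▸ Ideal.mem_span_singleton.mp (hs _ htJ)⟩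

end Domain

theorem gcd_of_locallyGCD_locallyFinite_trivialPicard_general
    {D K : Type*} [CommRing D] [IsDomain D] [Field K] [Algebra D K] [IsFractionRing D K]
    (hloc : ∀ (M : Ideal D) [M.IsMaximal],
      ∀ a b : Localization.AtPrime M, a ≠ 0 → b ≠ 0 →
        (Ideal.span {a} ⊓ Ideal.span {b} : Ideal (Localization.AtPrime M)).IsPrincipal)
    (F : Set (Ideal D)) (hF_top : ∀ P ∈ F, P ≠ ⊤) (hF : IsDefiningFamily K F)
    (hF_fin : IsLocallyFiniteFamily F)
    (hpic : ∀ I : Ideal D,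
      (I : FractionalIdeal D⁰ K) * (I : FractionalIdeal D⁰ K)⁻¹ = 1 → I.IsPrincipal)
    (a b : D) (ha : a ≠ 0) (hb : b ≠ 0) :
    (Ideal.span {a} ⊓ Ideal.span {b} : Ideal D).IsPrincipal := by
  have hI : (Ideal.span {a} ⊓ Ideal.span {b} : Ideal D) ≠ ⊥ :=
    (Submodule.ne_bot_iff _).mpr ⟨a * b, ⟨Ideal.mem_span_singleton.mpr (dvd_mul_right a b),
      Ideal.mem_span_singleton.mpr (dvd_mul_left b a)⟩, mul_ne_zero ha hb⟩
  refine hpic _ (hF.mul_inv_eq_one_of_locally_isPrincipal hF_fin hF_top hI fun M _ ↦ ?_)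
  have hinj : Function.Injective (algebraMap D (Localization.AtPrime M)) :=
    IsLocalization.injective _ M.primeCompl_le_nonZeroDivisors
  rw [IsLocalization.map_inf M.primeCompl, Ideal.map_span, Ideal.map_span, Set.image_singleton,
    Set.image_singleton]
  exact hloc M _ _ ((map_ne_zero_iff _ hinj).mpr ha) ((map_ne_zero_iff _ hinj).mpr hb)

/-- Let `D` be an integral domain with quotient field `K` such that every
localization `D_M` at a maximal ideal `M` is a GCD domain, and suppose there is a family
`F` of nonzero prime ideals of `D` such that `D = ∩_{P ∈ F} D_P` inside `K` and the
intersection is locally finite. If every invertible ideal of `D` is principal, then `D`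
is a GCD domain. -/
theorem gcd_of_locallyGCD_locallyFinite_trivialPicard
    {D K : Type*} [CommRing D] [IsDomain D] [Field K] [Algebra D K] [IsFractionRing D K]
    (hloc : ∀ (M : Ideal D) [M.IsMaximal],
      ∀ a b : Localization.AtPrime M, a ≠ 0 → b ≠ 0 →
        (Ideal.span {a} ⊓ Ideal.span {b} : Ideal (Localization.AtPrime M)).IsPrincipal)
    (F : Set (Ideal D)) (hFprime : ∀ P ∈ F, P.IsPrime ∧ P ≠ ⊥)
    (hFint : ∀ x : K,
      (∀ P ∈ F, ∃ a t : D, t ∉ P ∧ x * algebraMap D K t = algebraMap D K a) →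
      ∃ d : D, algebraMap D K d = x)
    (hFlf : ∀ x : D, x ≠ 0 → ¬IsUnit x → {P ∈ F | x ∈ P}.Finite)
    (hpic : ∀ I : Ideal D,
      (I : FractionalIdeal D⁰ K) * (I : FractionalIdeal D⁰ K)⁻¹ = 1 → I.IsPrincipal) :
    ∀ a b : D, a ≠ 0 → b ≠ 0 → (Ideal.span {a} ⊓ Ideal.span {b} : Ideal D).IsPrincipal := by
  exact gcd_of_locallyGCD_locallyFinite_trivialPicard_general hloc F
    (fun P hP ↦ (hFprime P hP).1.ne_top) hFint hFlf hpic
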